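/- Let A be an n×n complex matrix with n ≥ 1, and set A₁ = (A + A*)/2, A₂ = (A − A*)/(2i). Then the set K = {(Re trace(W), Re trace(A₁W), Re trace(A₂W)) ∈ ℝ³ : W ∈ ℂ^{n×n} positive semidefinite} equals the set {t·(1, x₁, x₂) : t ≥ 0, (x₁, x₂) ∈ conv W(A)}, where W(A) = {(w*A₁w, w*A₂w) : w ∈ ℂⁿ, w*w = 1} and conv denotes convex hull. In particular K is a closed convex cone, the conic hull of the numerical range of A placed at height 1. -/

import Mathlib

/-!
The map `W ↦ (Re tr W, Re tr(A₁W), Re tr(A₂W))` is real-linear, so the image `K` of the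
positive semidefinite cone is a convex cone. A positive semidefinite `W` is a sum of matrices
`w w*`, and each of those is mapped to `‖w‖² (1, x)` with `x` in the numerical range (any `x` will
do when `w = 0`); since the conic hull of a convex set is closed under addition, `K` lies in the
conic hull. Conversely the section `{x | (1, x) ∈ K}` is convex and contains the numerical range,
hence its convex hull. Closedness of `K` comes from writing `W = BᴴB`: a bound on `tr W = ∑ |Bᵢⱼ|²`
bounds `B`, so preimages of a convergent sequence in `K` subconverge.
-/

open Matrix
open scoped ComplexOrder

open scoped MatrixOrder Matrix.Norms.L2Operator in
/-- Every positive semidefinite matrix is a Gram matrix. The C*-algebra structure used for this is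
local to the lemma. -/
lemma exists_eq_conjTranspose_mul_self {n : ℕ} {W : Matrix (Fin n) (Fin n) ℂ}
    (hW : W.PosSemidef) : ∃ B : Matrix (Fin n) (Fin n) ℂ, W = Bᴴ * B :=
  CStarAlgebra.nonneg_iff_eq_star_mul_self.1 hW.nonneg

/-- The real-linear map `W ↦ (Re tr W, Re tr(MW), Re tr(NW))`. -/
def traceMap {n : ℕ} (M N : Matrix (Fin n) (Fin n) ℂ) :
    Matrix (Fin n) (Fin n) ℂ →ₗ[ℝ] ℝ × ℝ × ℝ where
  toFun W := (W.trace.re, ((M * W).trace).re, ((N * W).trace).re)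
  map_add' W V := by simp [Matrix.mul_add]
  map_smul' c W := by simp

/-- The image of the positive semidefinite cone under `traceMap M N`. -/
def projCone {n : ℕ} (M N : Matrix (Fin n) (Fin n) ℂ) : Set (ℝ × ℝ × ℝ) :=
  {p | ∃ W : Matrix (Fin n) (Fin n) ℂ, W.PosSemidef ∧ p = traceMap M N W}

/-- The joint numerical range of `M` and `N`, with real parts taken coordinatewise. -/
def numRange {n : ℕ} (M N : Matrix (Fin n) (Fin n) ℂ) : Set (ℝ × ℝ) :=
  {x | ∃ w : Fin n → ℂ, star w ⬝ᵥ w = 1 ∧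
    x = ((star w ⬝ᵥ M.mulVec w).re, (star w ⬝ᵥ N.mulVec w).re)}

/-- The conic hull of a planar set `S` placed at height `1`. -/
def conicHull (S : Set (ℝ × ℝ)) : Set (ℝ × ℝ × ℝ) :=
  {p | ∃ t : ℝ, 0 ≤ t ∧ ∃ x ∈ S, p = (t, t * x.1, t * x.2)}

lemma conicHull_add {S : Set (ℝ × ℝ)} (hS : Convex ℝ S) {p q : ℝ × ℝ × ℝ}
    (hp : p ∈ conicHull S) (hq : q ∈ conicHull S) : p + q ∈ conicHull S := by
  obtain ⟨t, ht, x, hx, rfl⟩ := hp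
  obtain ⟨s, hs, y, hy, rfl⟩ := hq
  rcases (add_nonneg ht hs).eq_or_lt' with h | h
  · obtain ⟨rfl, rfl⟩ := (add_eq_zero_iff_of_nonneg ht hs).1 h
    exact ⟨0, le_rfl, x, hx, by simp⟩
  · refine ⟨t + s, h.le, (t / (t + s)) • x + (s / (t + s)) • y,
      hS hx hy (by positivity) (by positivity) (by field_simp), ?_⟩
    ext <;> simp <;> field_simp

lemma traceMap_vecMulVec {n : ℕ} (M N : Matrix (Fin n) (Fin n) ℂ) (w : Fin n → ℂ) :
    traceMap M N (vecMulVec w (star w)) =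
      ((star w ⬝ᵥ w).re, (star w ⬝ᵥ M.mulVec w).re, (star w ⬝ᵥ N.mulVec w).re) := by
  simp [traceMap, mul_vecMulVec, trace_vecMulVec, dotProduct_comm]

lemma star_dotProduct_self_eq {n : ℕ} (w : Fin n → ℂ) :
    star w ⬝ᵥ w = ((∑ i, ‖w i‖ ^ 2 : ℝ) : ℂ) := by
  simp [dotProduct, Complex.conj_mul']

/-- The unit vector in the direction of `w` provides the point of the numerical range. -/
lemma traceMap_vecMulVec_mem {n : ℕ} (M N : Matrix (Fin n) (Fin n) ℂ)
    (hne : (numRange M N).Nonempty) (w : Fin n → ℂ) :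
    traceMap M N (vecMulVec w (star w)) ∈ conicHull (numRange M N) := by
  have hw := star_dotProduct_self_eq w
  set t : ℝ := ∑ i, ‖w i‖ ^ 2 with htdef
  have ht : 0 ≤ t := Finset.sum_nonneg fun i _ => by positivity
  rcases ht.eq_or_lt' with h | h
  · obtain ⟨x, hx⟩ := hne
    have hw0 : w = 0 := by
      rw [h, Complex.ofReal_zero] at hw
      exact dotProduct_star_self_eq_zero.1 hw
    refine ⟨0, le_rfl, x, hx, ?_⟩
    subst hw0
    ext <;> simp
  · have hs : (((Real.sqrt t)⁻¹ : ℝ) : ℂ) * (((Real.sqrt t)⁻¹ : ℝ) : ℂ) = ((t⁻¹ : ℝ) : ℂ) := by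
      rw [← Complex.ofReal_mul, ← mul_inv, Real.mul_self_sqrt ht]
    have key (v : Fin n → ℂ) : star ((((Real.sqrt t)⁻¹ : ℝ) : ℂ) • w) ⬝ᵥ
        ((((Real.sqrt t)⁻¹ : ℝ) : ℂ) • v) = ((t⁻¹ : ℝ) : ℂ) * (star w ⬝ᵥ v) := by
      rw [star_smul, smul_dotProduct, dotProduct_smul, smul_eq_mul, smul_eq_mul, ← mul_assoc,
        ← hs]
      simp
    refine ⟨t, ht, _, ⟨(((Real.sqrt t)⁻¹ : ℝ) : ℂ) • w, ?_, rfl⟩, ?_⟩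
    · rw [key, hw, ← Complex.ofReal_mul, inv_mul_cancel₀ h.ne', Complex.ofReal_one]
    · rw [traceMap_vecMulVec, mulVec_smul, mulVec_smul, key, key, hw]
      simp only [Complex.re_ofReal_mul, Complex.ofReal_re]
      ext <;> simp [h.ne']

lemma numRange_nonempty {n : ℕ} (hn : 1 ≤ n) (M N : Matrix (Fin n) (Fin n) ℂ) :
    (numRange M N).Nonempty :=
  ⟨_, Pi.single (⟨0, hn⟩ : Fin n) 1, by simp, rfl⟩

lemma projCone_add {n : ℕ} (M N : Matrix (Fin n) (Fin n) ℂ) {p q : ℝ × ℝ × ℝ}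
    (hp : p ∈ projCone M N) (hq : q ∈ projCone M N) : p + q ∈ projCone M N := by
  obtain ⟨W, hW, rfl⟩ := hp
  obtain ⟨V, hV, rfl⟩ := hq
  exact ⟨W + V, hW.add hV, (map_add _ _ _).symm⟩

lemma projCone_smul {n : ℕ} (M N : Matrix (Fin n) (Fin n) ℂ) {c : ℝ} (hc : 0 ≤ c)
    {p : ℝ × ℝ × ℝ} (hp : p ∈ projCone M N) : c • p ∈ projCone M N := by
  obtain ⟨W, hW, rfl⟩ := hp
  exact ⟨c • W, hW.smul hc, (map_smul _ _ _).symm⟩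

lemma projCone_convex {n : ℕ} (M N : Matrix (Fin n) (Fin n) ℂ) : Convex ℝ (projCone M N) :=
  fun _ hp _ hq _ _ ha hb _ => projCone_add M N (projCone_smul M N ha hp) (projCone_smul M N hb hq)

lemma projCone_subset {n : ℕ} (hn : 1 ≤ n) (M N : Matrix (Fin n) (Fin n) ℂ) :
    projCone M N ⊆ conicHull (convexHull ℝ (numRange M N)) := by
  rintro _ ⟨W, hW, rfl⟩
  have hne := numRange_nonempty hn M N
  obtain ⟨m, v, rfl⟩ := posSemidef_iff_eq_sum_vecMulVec.1 hW
  rw [map_sum]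
  refine Finset.sum_induction _ (· ∈ conicHull (convexHull ℝ (numRange M N)))
    (fun _ _ => conicHull_add (convex_convexHull ℝ _)) ?_ fun i _ => ?_
  · obtain ⟨x, hx⟩ := hne
    exact ⟨0, le_rfl, x, subset_convexHull ℝ _ hx, by ext <;> simp⟩
  · obtain ⟨t, ht, x, hx, h⟩ := traceMap_vecMulVec_mem M N hne (v i)
    exact ⟨t, ht, x, subset_convexHull ℝ _ hx, h⟩

lemma conicHull_subset {n : ℕ} (M N : Matrix (Fin n) (Fin n) ℂ) :
    conicHull (convexHull ℝ (numRange M N)) ⊆ projCone M N := by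
  rintro _ ⟨t, ht, x, hx, rfl⟩
  have hsec : Convex ℝ {y : ℝ × ℝ | ((1 : ℝ), y) ∈ projCone M N} := by
    intro y hy z hz a b ha hb hab
    have := projCone_convex M N hy hz ha hb hab
    simpa [hab] using this
  have hsub : numRange M N ⊆ {y : ℝ × ℝ | ((1 : ℝ), y) ∈ projCone M N} := by
    rintro _ ⟨w, hw, rfl⟩
    refine ⟨vecMulVec w (star w), posSemidef_vecMulVec_self_star w, ?_⟩
    rw [traceMap_vecMulVec, hw, Complex.one_re]
  have hmem : ((1 : ℝ), x) ∈ projCone M N := convexHull_min hsub hsec hx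
  have := projCone_smul M N ht hmem
  rwa [Prod.smul_mk, smul_eq_mul, mul_one] at this

/-- The bound `‖B‖² ≤ tr(BᴴB)` for the entrywise supremum norm makes `B ↦ traceMap M N (BᴴB)`
proper enough for its range to be closed. -/
lemma projCone_isClosed {n : ℕ} (M N : Matrix (Fin n) (Fin n) ℂ) : IsClosed (projCone M N) := by
  -- Plain functions are used because `Matrix` carries no global metric.
  let f : (Fin n → Fin n → ℂ) → ℝ × ℝ × ℝ := fun B => traceMap M N ((of B)ᴴ * of B)
  have hf : Continuous f := by
    have hof : Continuous fun B : Fin n → Fin n → ℂ => (of B)ᴴ * of B :=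
      (Continuous.matrix_conjTranspose continuous_id).matrix_mul continuous_id
    have hre (L : Matrix (Fin n) (Fin n) ℂ) :
        Continuous fun B : Fin n → Fin n → ℂ => (L * ((of B)ᴴ * of B)).trace.re :=
      Complex.continuous_re.comp (continuous_const.matrix_mul hof).matrix_trace
    exact (Complex.continuous_re.comp hof.matrix_trace).prodMk ((hre M).prodMk (hre N))
  have hbound (B : Fin n → Fin n → ℂ) (i j : Fin n) : ‖B i j‖ ^ 2 ≤ (f B).1 := by
    have h1 : (f B).1 = ∑ j, ∑ i, ‖B i j‖ ^ 2 := by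
      simp [f, traceMap, trace, mul_apply, Complex.conj_mul', ← Complex.ofReal_pow]
    rw [h1]
    exact (Finset.single_le_sum (f := fun i => ‖B i j‖ ^ 2) (fun _ _ => by positivity)
      (Finset.mem_univ i)).trans (Finset.single_le_sum (f := fun j => ∑ i, ‖B i j‖ ^ 2)
        (fun _ _ => Finset.sum_nonneg fun _ _ => by positivity) (Finset.mem_univ j))
  have hrange : projCone M N = Set.range f := by
    ext p
    constructor
    · rintro ⟨W, hW, rfl⟩
      obtain ⟨B, rfl⟩ := exists_eq_conjTranspose_mul_self hW
      exact ⟨B, rfl⟩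
    · rintro ⟨B, rfl⟩
      exact ⟨_, posSemidef_conjTranspose_mul_self _, rfl⟩
  rw [hrange]
  refine IsSeqClosed.isClosed fun u p hu hup => ?_
  choose B hB using hu
  obtain ⟨C, hC⟩ := ((continuous_fst.tendsto p).comp hup).bddAbove_range
  have hBb (k : ℕ) : B k ∈ Metric.closedBall (0 : Fin n → Fin n → ℂ) (Real.sqrt C) := by
    rw [mem_closedBall_zero_iff]
    refine (pi_norm_le_iff_of_nonneg (Real.sqrt_nonneg _)).2 fun i =>
      (pi_norm_le_iff_of_nonneg (Real.sqrt_nonneg _)).2 fun j => Real.le_sqrt_of_sq_le ?_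
    refine (hbound (B k) i j).trans ?_
    rw [hB]
    exact hC ⟨k, rfl⟩
  obtain ⟨B₀, -, φ, hφ, hlim⟩ := (isCompact_closedBall _ _).tendsto_subseq hBb
  refine ⟨B₀, tendsto_nhds_unique ((hf.tendsto B₀).comp hlim) ?_⟩
  have : f ∘ B ∘ φ = u ∘ φ := by
    funext k
    exact hB (φ k)
  rw [this]
  exact hup.comp hφ.tendsto_atTop

/-- The projection `{(Re tr W, Re tr(A₁W), Re tr(A₂W)) : W ⪰ 0}` of the semidefinite
cone is the conic hull of the convex hull of the numerical range placed at height `1`;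
in particular it is a closed convex cone. -/
theorem projection_semidefinite_cone_eq_conic_hull {n : ℕ} (hn : 1 ≤ n)
    (A A₁ A₂ : Matrix (Fin n) (Fin n) ℂ)
    (hA₁ : A₁ = (2 : ℂ)⁻¹ • (A + Aᴴ))
    (hA₂ : A₂ = (2 * Complex.I)⁻¹ • (A - Aᴴ)) :
    ({p : ℝ × ℝ × ℝ | ∃ W : Matrix (Fin n) (Fin n) ℂ, W.PosSemidef ∧
        p = (W.trace.re, ((A₁ * W).trace).re, ((A₂ * W).trace).re)} =
      {p : ℝ × ℝ × ℝ | ∃ t : ℝ, 0 ≤ t ∧ ∃ x : ℝ × ℝ,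
        x ∈ convexHull ℝ {x : ℝ × ℝ | ∃ w : Fin n → ℂ, star w ⬝ᵥ w = 1 ∧
          x = ((star w ⬝ᵥ A₁.mulVec w).re, (star w ⬝ᵥ A₂.mulVec w).re)} ∧
        p = (t, t * x.1, t * x.2)}) ∧
    IsClosed {p : ℝ × ℝ × ℝ | ∃ W : Matrix (Fin n) (Fin n) ℂ, W.PosSemidef ∧
        p = (W.trace.re, ((A₁ * W).trace).re, ((A₂ * W).trace).re)} ∧
    Convex ℝ {p : ℝ × ℝ × ℝ | ∃ W : Matrix (Fin n) (Fin n) ℂ, W.PosSemidef ∧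
        p = (W.trace.re, ((A₁ * W).trace).re, ((A₂ * W).trace).re)} ∧
    ∀ c : ℝ, 0 ≤ c → ∀ p ∈ {p : ℝ × ℝ × ℝ | ∃ W : Matrix (Fin n) (Fin n) ℂ,
        W.PosSemidef ∧
        p = (W.trace.re, ((A₁ * W).trace).re, ((A₂ * W).trace).re)},
      c • p ∈ {p : ℝ × ℝ × ℝ | ∃ W : Matrix (Fin n) (Fin n) ℂ, W.PosSemidef ∧
        p = (W.trace.re, ((A₁ * W).trace).re, ((A₂ * W).trace).re)} := by
  exact ⟨(projCone_subset hn A₁ A₂).antisymm (conicHull_subset A₁ A₂), projCone_isClosed A₁ A₂,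
    projCone_convex A₁ A₂, fun _ hc _ hp => projCone_smul A₁ A₂ hc hp⟩
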